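/- arXiv:2601.10531 — 8 statements merged into one kernel-verified Lean document; each statement's English description precedes it below -/
import Mathlib

section
/- Let G = (V,E) be a finite DAG and let G' = (V',E') be a coarsening of G with surjection χ : V → V'. Then for all pairwise disjoint sets A', B', C' ⊆ V', if A' and B' are d-separated given C' in G', then χ⁻¹(A') and χ⁻¹(B') are d-separated given χ⁻¹(C') in G. -/
/-- There exists an active path (relative to the conditioning set `C`) between `a` and `b`
in the graph with directed-edge relation `E`; i.e. `a` and `b` are d-connected given `C`.
A path is a list of distinct nodes, of length at least 2, starting at `a` and ending at `b`,
with consecutive nodes joined by an edge in either direction; it is active relative to `C`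
(where `a, b ∉ C`) if every interior collider is in `C` or has a descendant in `C`, and
every interior non-collider is not in `C`. -/
def ActiveBetween {V : Type*} (E : V → V → Prop) (C : Set V) (a b : V) : Prop :=
  a ∉ C ∧ b ∉ C ∧
  ∃ p : List V,
    2 ≤ p.length ∧ p.Nodup ∧
    p.head? = some a ∧ p.getLast? = some b ∧
    (∀ i, ∀ h : i + 1 < p.length,
      E (p[i]'(by omega)) (p[i + 1]'h) ∨ E (p[i + 1]'h) (p[i]'(by omega))) ∧
    (∀ i, ∀ h : i + 2 < p.length,
      ((E (p[i]'(by omega)) (p[i + 1]'(by omega)) ∧ E (p[i + 2]'h) (p[i + 1]'(by omega))) →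
        ∃ c ∈ C, Relation.ReflTransGen E (p[i + 1]'(by omega)) c) ∧
      (¬ (E (p[i]'(by omega)) (p[i + 1]'(by omega)) ∧ E (p[i + 2]'h) (p[i + 1]'(by omega))) →
        p[i + 1]'(by omega) ∉ C))

/-- `A` and `B` are d-separated given `C`: no active path relative to `C`
between any `a ∈ A` and `b ∈ B`. -/
def DSep {V : Type*} (E : V → V → Prop) (C A B : Set V) : Prop :=
  ∀ a ∈ A, ∀ b ∈ B, ¬ ActiveBetween E C a b

/-!
The image under `χ` of an active path is a walk which may stall or revisit nodes; where it moves,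
the arrows keep their directions, since `E'` has no 2-cycles. Repetitions are removed by cutting out
the loop from a visit of `x` to a later one. Cutting keeps the walk active: if `x ∈ C`, then `x` is
a collider at both visits, hence also after the cut. If `x` becomes a collider by the cut, then the
first visit was entered along an arrow into `x` and the later one is left against an arrow into `x`;
somewhere in between the arrows must change direction, and the first place where they do is a
collider of the old walk and a descendant of `x`, so `x` has a descendant in `C`.
-/

/-- The nodes which have a descendant in `C`, every node being a descendant of itself. -/
def ancestors {V : Type*} (E : V → V → Prop) (C : Set V) : Set V :=
  {v | ∃ c ∈ C, Relation.ReflTransGen E v c}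

/-- A walk may pass through `v`, which it meets as a collider or as a non-collider. Colliders have
to lie in `A`, which stands for the ancestors of the conditioning set `C`; it is a separate
parameter because the preimage of the ancestors of `C'` can be larger than the set of ancestors of
`χ ⁻¹' C'`. -/
def Passable {V : Type*} (C A : Set V) (collider : Prop) (v : V) : Prop :=
  (collider → v ∈ A) ∧ (¬ collider → v ∉ C)

/-- The list of nodes is an active walk, seen as the continuation of an earlier walk whose last edge
points into the first node precisely if `into` holds. Taking `into` to be `False` amounts to having
no earlier walk and requiring the first node not to be in `C`. -/
def ActiveFrom {V : Type*} (E : V → V → Prop) (C A : Set V) : Prop → List V → Prop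
  | into, v :: w :: l =>
    (E v w ∨ E w v) ∧ Passable C A (into ∧ E w v) v ∧ ActiveFrom E C A (E v w) (w :: l)
  | _, _ => True

section Walk

variable {V : Type*} {E : V → V → Prop} {C A : Set V} {into : Prop}

theorem mem_ancestors_of_rel {v w : V} (h : E v w) (hw : w ∈ ancestors E C) :
    v ∈ ancestors E C :=
  hw.imp fun _ hc => hc.imp_right (Relation.ReflTransGen.head h)

theorem Passable.mono {A₂ : Set V} {collider : Prop} {v : V} (hA : A ⊆ A₂)
    (h : Passable C A collider v) : Passable C A₂ collider v :=
  h.imp_left fun h hv => hA (h hv)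

namespace ActiveFrom

theorem mono {A₂ : Set V} (hA : A ⊆ A₂) {p : List V} (h : ActiveFrom E C A into p) :
    ActiveFrom E C A₂ into p := by
  induction p generalizing into with
  | nil => trivial
  | cons v l ih =>
    cases l with
    | nil => trivial
    | cons w l => exact ⟨h.1, h.2.1.mono hA, ih h.2.2⟩

theorem tail {v w : V} {l : List V} (h : ActiveFrom E C A into (v :: w :: l)) :
    ActiveFrom E C A (E v w) (w :: l) :=
  h.2.2

theorem exists_of_suffix {p s : List V} (h : ActiveFrom E C A into p) (hs : s <:+ p) :
    ∃ into', ActiveFrom E C A into' s := by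
  induction p generalizing into with
  | nil => exact ⟨into, List.suffix_nil.1 hs ▸ h⟩
  | cons v l ih =>
    obtain rfl | hs := List.suffix_cons_iff.1 hs
    · exact ⟨into, h⟩
    · cases l with
      | nil => exact ⟨into, List.suffix_nil.1 hs ▸ trivial⟩
      | cons w l => exact ih h.tail hs

theorem head_mem_of_suffix (hA : ∀ v w, E v w → w ∈ A → v ∈ A) {v w u : V} {l t : List V}
    (h : ActiveFrom E C A True (v :: l)) (hs : w :: u :: t <:+ v :: l) (huw : E u w) : v ∈ A := by
  induction l generalizing v with
  | nil => exact absurd hs.length_le (by simp)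
  | cons x l ih =>
    obtain ⟨hadj, hpass, htail⟩ := h
    by_cases hxv : E x v
    · exact hpass.1 ⟨trivial, hxv⟩
    have hvx : E v x := hadj.resolve_right hxv
    obtain heq | hs := List.suffix_cons_iff.1 hs
    · obtain ⟨rfl, rfl, rfl⟩ : w = v ∧ u = x ∧ t = l := by simpa using heq
      exact absurd huw hxv
    · exact hA v x hvx (ih (by simpa only [hvx] using htail) hs)

theorem cut_loop (hA : ∀ v w, E v w → w ∈ A → v ∈ A) {v w : V} {l t : List V}
    (h : ActiveFrom E C A into (v :: l)) (hs : w :: t <:+ l)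
    (hwC : w ∈ C → v ∈ C) (hwA : v ∈ A → w ∈ A) : ActiveFrom E C A into (w :: t) := by
  obtain _ | ⟨u, t⟩ := t
  · trivial
  obtain ⟨into', hadj, hpass, htail⟩ := h.exists_of_suffix (hs.trans (List.suffix_cons v l))
  refine ⟨hadj, ⟨?collider, ?noncollider⟩, htail⟩
  case collider =>
    rintro ⟨hinto, huw⟩
    have h : ActiveFrom E C A True (v :: l) := by simpa only [hinto] using h
    exact hwA (h.head_mem_of_suffix hA (hs.trans (List.suffix_cons v l)) huw)
  case noncollider =>
    intro hnot hw
    have huw : E u w := by_contra fun huw => hpass.2 (fun hc => huw hc.2) hw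
    have hinto : ¬ into := fun hinto => hnot ⟨hinto, huw⟩
    obtain _ | ⟨x, l⟩ := l
    · exact absurd hs.length_le (by simp)
    · exact h.2.1.2 (fun hc => hinto hc.1) (hwC hw)

end ActiveFrom

theorem activeFrom_iff_getElem {p : List V} :
    ActiveFrom E C A into p ↔
      (∀ h : 1 < p.length, Passable C A (into ∧ E p[1] p[0]) p[0]) ∧
      (∀ i, ∀ h : i + 1 < p.length, E p[i] p[i + 1] ∨ E p[i + 1] p[i]) ∧
      ∀ i, ∀ h : i + 2 < p.length,
        Passable C A (E p[i] p[i + 1] ∧ E p[i + 2] p[i + 1]) p[i + 1] := by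
  induction p generalizing into with
  | nil => simp [ActiveFrom]
  | cons v l ih =>
    cases l with
    | nil => simp [ActiveFrom]
    | cons w l =>
      rw [ActiveFrom, ih]
      constructor
      · rintro ⟨hadj, hpass, hpass₀, hadjs, hpasses⟩
        refine ⟨fun _ => hpass, fun i h => ?_, fun i h => ?_⟩
        · cases i with
          | zero => exact hadj
          | succ i => exact hadjs i (Nat.lt_of_succ_lt_succ h)
        · cases i with
          | zero => exact hpass₀ (Nat.lt_of_succ_lt_succ h)
          | succ i => exact hpasses i (Nat.lt_of_succ_lt_succ h)
      · rintro ⟨hpass, hadjs, hpasses⟩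
        exact ⟨hadjs 0 (by simp), hpass (by simp), fun h => hpasses 0 (Nat.succ_lt_succ h),
          fun i h => hadjs (i + 1) (Nat.succ_lt_succ h),
          fun i h => hpasses (i + 1) (Nat.succ_lt_succ h)⟩

theorem activeBetween_iff_activeFrom {a b : V} (hab : a ≠ b) :
    ActiveBetween E C a b ↔ a ∉ C ∧ b ∉ C ∧ ∃ p : List V, p.Nodup ∧
      p.head? = some a ∧ p.getLast? = some b ∧ ActiveFrom E C (ancestors E C) False p := by
  refine and_congr_right fun ha => and_congr_right fun _ => exists_congr fun p => ?_
  rw [activeFrom_iff_getElem]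
  constructor
  · rintro ⟨-, hnodup, hhead, hlast, hadj, hpass⟩
    refine ⟨hnodup, hhead, hlast, fun h => ⟨fun hc => hc.1.elim, fun _ => ?_⟩, hadj, hpass⟩
    rwa [(List.getElem_eq_iff _).2 (List.head?_eq_getElem? ▸ hhead)]
  · rintro ⟨hnodup, hhead, hlast, -, hadj, hpass⟩
    refine ⟨?_, hnodup, hhead, hlast, hadj, hpass⟩
    match p with
    | [] => simp at hhead
    | [x] => exact absurd (by simp_all) hab
    | _ :: _ :: _ => simp

end Walk

section Map

variable {V V' : Type*} {E : V → V → Prop} {E' : V' → V' → Prop} {χ : V → V'}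

theorem ancestors_preimage_subset (hχ : ∀ v w, E v w → χ v ≠ χ w → E' (χ v) (χ w)) (C' : Set V') :
    ancestors E (χ ⁻¹' C') ⊆ χ ⁻¹' ancestors E' C' := by
  rintro v ⟨c, hc, hvc⟩
  refine ⟨χ c, hc, hvc.lift' χ fun x y hxy => ?_⟩
  by_cases h : χ x = χ y
  · rw [Function.onFun, h]
  · exact .single (hχ x y hxy h)

theorem mem_preimage_of_rel (hχ : ∀ v w, E v w → χ v ≠ χ w → E' (χ v) (χ w)) {A' : Set V'}
    (hA' : ∀ x y, E' x y → y ∈ A' → x ∈ A') {v w : V} (hvw : E v w) (hw : w ∈ χ ⁻¹' A') :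
    v ∈ χ ⁻¹' A' := by
  by_cases h : χ v = χ w
  · rwa [Set.mem_preimage, h]
  · exact hA' _ _ (hχ v w hvw h) hw

theorem map_rel_iff_of_adj (hE' : ∀ x y, E' x y → ¬ E' y x)
    (hχ : ∀ v w, E v w → χ v ≠ χ w → E' (χ v) (χ w)) {v w : V} (hadj : E v w ∨ E w v)
    (hne : χ v ≠ χ w) : E' (χ v) (χ w) ↔ E v w :=
  ⟨fun h => hadj.resolve_right fun hwv => hE' _ _ h (hχ w v hwv hne.symm), fun h => hχ v w h hne⟩

theorem ActiveFrom.cons_map (hE' : ∀ x y, E' x y → ¬ E' y x)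
    (hχ : ∀ v w, E v w → χ v ≠ χ w → E' (χ v) (χ w)) {C' A' : Set V'} {into : Prop} {v w : V}
    {l : List V} {q : List V'} (h : ActiveFrom E (χ ⁻¹' C') (χ ⁻¹' A') into (v :: w :: l))
    (hne : χ v ≠ χ w) (hq : ActiveFrom E' C' A' (E v w) (χ w :: q)) :
    ActiveFrom E' C' A' into (χ v :: χ w :: q) := by
  obtain ⟨hadj, hpass, -⟩ := h
  rw [ActiveFrom, map_rel_iff_of_adj hE' hχ hadj hne, map_rel_iff_of_adj hE' hχ hadj.symm hne.symm]
  exact ⟨hadj, hpass, hq⟩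

theorem ActiveFrom.exists_nodup_map (hE' : ∀ x y, E' x y → ¬ E' y x)
    (hχ : ∀ v w, E v w → χ v ≠ χ w → E' (χ v) (χ w)) {C' A' : Set V'}
    (hA' : ∀ x y, E' x y → y ∈ A' → x ∈ A') {into : Prop} {p : List V}
    (h : ActiveFrom E (χ ⁻¹' C') (χ ⁻¹' A') into p) :
    ∃ q : List V', q.Nodup ∧ q ⊆ p.map χ ∧ q.head? = p.head?.map χ ∧
      q.getLast? = p.getLast?.map χ ∧ ActiveFrom E' C' A' into q := by
  induction hn : p.length using Nat.strong_induction_on generalizing into p with | _ n ih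
  subst hn
  match p with
  | [] => exact ⟨[], by simp [ActiveFrom]⟩
  | [v] => exact ⟨[χ v], by simp [ActiveFrom]⟩
  | v :: w :: l =>
    by_cases hv : χ v ∈ (w :: l).map χ
    · obtain ⟨u, hu, huv⟩ := List.mem_map.1 hv
      obtain ⟨s, t, hst⟩ := List.append_of_mem hu
      have hcut : ActiveFrom E (χ ⁻¹' C') (χ ⁻¹' A') into (u :: t) :=
        h.cut_loop (fun _ _ => mem_preimage_of_rel hχ hA') ⟨s, hst.symm⟩ (by simp [huv])
          (by simp [huv])
      have hlen : (u :: t).length < (v :: w :: l).length := by simp [hst]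
      obtain ⟨q, hnodup, hsub, hhead, hlast, hq⟩ := ih _ hlen hcut rfl
      have hsuffix : u :: t <:+ v :: w :: l := ⟨v :: s, by rw [hst, List.cons_append]⟩
      exact ⟨q, hnodup, List.Subset.trans hsub (List.map_subset χ hsuffix.subset),
        by simpa [huv] using hhead,
        by rw [hlast, hst, ← List.cons_append, List.getLast?_append_cons], hq⟩
    · obtain ⟨q, hnodup, hsub, hhead, hlast, hq⟩ := ih _ (by simp) h.tail rfl
      obtain ⟨q, rfl⟩ : ∃ q', q = χ w :: q' := List.head?_eq_some_iff.1 hhead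
      have hne : χ v ≠ χ w := fun heq => hv (by simp [heq])
      exact ⟨χ v :: χ w :: q, List.nodup_cons.2 ⟨fun hx => hv (hsub hx), hnodup⟩,
        List.cons_subset_cons _ hsub, rfl, by simpa using hlast, h.cons_map hE' hχ hne hq⟩

theorem ActiveBetween.map (hE' : ∀ x y, E' x y → ¬ E' y x)
    (hχ : ∀ v w, E v w → χ v ≠ χ w → E' (χ v) (χ w)) {C' : Set V'} {a b : V} (hab : χ a ≠ χ b)
    (h : ActiveBetween E (χ ⁻¹' C') a b) : ActiveBetween E' C' (χ a) (χ b) := by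
  obtain ⟨ha, hb, p, -, hhead, hlast, hp⟩ :=
    (activeBetween_iff_activeFrom (ne_of_apply_ne χ hab)).1 h
  obtain ⟨q, hnodup, -, hqhead, hqlast, hq⟩ :=
    (hp.mono (ancestors_preimage_subset hχ C')).exists_nodup_map hE' hχ
      fun _ _ => mem_ancestors_of_rel
  exact (activeBetween_iff_activeFrom hab).2
    ⟨ha, hb, q, hnodup, by simp [hqhead, hhead], by simp [hqlast, hlast], hq⟩

theorem coarsening_dseparation_pullback_general (hE' : ∀ x y, E' x y → ¬ E' y x)
    (hχ : ∀ v w, E v w → χ v ≠ χ w → E' (χ v) (χ w)) {A' B' C' : Set V'} (hAB : Disjoint A' B')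
    (hsep : DSep E' C' A' B') : DSep E (χ ⁻¹' C') (χ ⁻¹' A') (χ ⁻¹' B') :=
  fun a ha b hb h => hsep (χ a) ha (χ b) hb (h.map hE' hχ (hAB.ne_of_mem ha hb))

end Map

/-- if `G' = (V', E')` is a coarsening of the finite DAG `G = (V, E)` with
surjection `χ`, then for all pairwise disjoint `A', B', C' ⊆ V'`, d-separation of `A'` and `B'`
given `C'` in `G'` implies d-separation of `χ⁻¹(A')` and `χ⁻¹(B')` given `χ⁻¹(C')` in `G`. -/
theorem coarsening_dseparation_pullback
    {V V' : Type*} [Fintype V] [Fintype V']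
    (E : V → V → Prop) (E' : V' → V' → Prop)
    (hacyc : ∀ v, ¬ Relation.TransGen E v v)
    (hacyc' : ∀ x, ¬ Relation.TransGen E' x x)
    (χ : V → V') (hχ : Function.Surjective χ)
    (hE' : ∀ x y, E' x y ↔ ∃ v w, E v w ∧ χ v ≠ χ w ∧ χ v = x ∧ χ w = y)
    (A' B' C' : Set V')
    (hAB : Disjoint A' B') (hAC : Disjoint A' C') (hBC : Disjoint B' C')
    (hsep : DSep E' C' A' B') :
    DSep E (χ ⁻¹' C') (χ ⁻¹' A') (χ ⁻¹' B') :=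
  coarsening_dseparation_pullback_general (fun x _ hxy hyx => hacyc' x (.tail (.single hxy) hyx))
    (fun v w hvw hne => (hE' _ _).2 ⟨v, w, hvw, hne, rfl, rfl⟩) hAB hsep
end

section
/- Let G = (V,E) be a finite DAG, let G' = (V',E') be a coarsening of G with surjection χ : V → V', and let C' ⊆ V' with C = χ⁻¹(C'). If a, b ∈ V are d-connected given C in G (i.e., there exists a path between a and b active relative to C), and χ(a) ≠ χ(b) with χ(a), χ(b) ∉ C', then χ(a) and χ(b) are d-connected given C' in G'. -/
/-!
The proof passes through active walks, whose vertices may repeat. Contracting the edges inside the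
fibres of `χ` turns an active walk of `G` into one of `G'`: a fibre that the walk enters or leaves
through an edge out of it contains a non-collider, so it represents a vertex outside `C'`; a fibre
with both edges pointing into it contains a collider, so it inherits a descendant in `C'`.

In an acyclic graph, cutting out the loops of an active walk keeps it active. The only junction that
could become blocked is a collider `w` created by the cut. If the original walk had no collider at
`w`, it left `w` along an edge out of `w`, and following it forward one meets either a collider,
which gives `w` a descendant in the conditioning set, or `w` itself, which acyclicity forbids.
-/

section

variable {V V' : Type*} {E : V → V → Prop} {E' : V' → V' → Prop} {C' : Set V'} {C : Set V}

/-- The vertex `u` is an ancestor of the conditioning set `C`, i.e. a collider at `u` is active. -/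
def HasDescendantIn (E : V → V → Prop) (C : Set V) (u : V) : Prop :=
  ∃ c ∈ C, Relation.ReflTransGen E u c

namespace HasDescendantIn

theorem of_reflTransGen {u w : V} (h : Relation.ReflTransGen E w u) :
    HasDescendantIn E C u → HasDescendantIn E C w
  | ⟨c, hc, huc⟩ => ⟨c, hc, h.trans huc⟩

theorem map {χ : V → V'} (hmap : ∀ ⦃v w⦄, E v w → χ v ≠ χ w → E' (χ v) (χ w)) {u : V} :
    HasDescendantIn E (χ ⁻¹' C') u → HasDescendantIn E' C' (χ u) := by
  rintro ⟨c, hc, huc⟩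
  refine ⟨χ c, hc, huc.lift' χ fun v w hvw => ?_⟩
  by_cases hχ : χ v = χ w
  · rw [Function.onFun, hχ]
  · exact .single (hmap hvw hχ)

end HasDescendantIn

/-- The condition for a walk starting at `u` to remain active when an edge into `u` is put in front
of it. The flag tells whether the first edge of the walk points into `u`, so that `u` becomes a
collider. -/
def AdmitsEdgeInto (E : V → V → Prop) (C : Set V) (u : V) : Bool → Prop
  | true => HasDescendantIn E C u
  | false => u ∉ C

theorem AdmitsEdgeInto.of_notMem {u : V} (hu : u ∉ C) (hdesc : HasDescendantIn E C u) :
    ∀ d, AdmitsEdgeInto E C u d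
  | true => hdesc
  | false => hu

/-- `ActiveWalk E C b u l d`: the vertices `u :: l` form a walk from `u` to `b` that is active
relative to `C`, where vertices may repeat. The flag `d` tells whether the first edge points into
`u`; it is `false` for the walk without edges, so that `b ∉ C` is required as soon as the walk is
extended. -/
inductive ActiveWalk (E : V → V → Prop) (C : Set V) (b : V) : V → List V → Bool → Prop
  | nil : ActiveWalk E C b b [] false
  | cons_in {u w : V} {l : List V} {d : Bool} (walk : ActiveWalk E C b u l d) (edge : E u w)
      (notMem : u ∉ C) : ActiveWalk E C b w (u :: l) true
  | cons_out {u w : V} {l : List V} {d : Bool} (walk : ActiveWalk E C b u l d) (edge : E w u)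
      (admits : AdmitsEdgeInto E C u d) : ActiveWalk E C b w (u :: l) false

namespace ActiveWalk

theorem map {χ : V → V'} (hmap : ∀ ⦃v w⦄, E v w → χ v ≠ χ w → E' (χ v) (χ w))
    {b u : V} {l : List V} {d : Bool} (h : ActiveWalk E (χ ⁻¹' C') b u l d) :
    ∃ l' d', ActiveWalk E' C' (χ b) (χ u) l' d' ∧
      (AdmitsEdgeInto E (χ ⁻¹' C') u d → AdmitsEdgeInto E' C' (χ u) d') := by
  induction h with
  | nil => exact ⟨[], false, nil, id⟩
  | @cons_in u w _ _ _ edge notMem ih =>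
    obtain ⟨l', d', walk', -⟩ := ih
    by_cases hχ : χ u = χ w
    · refine ⟨l', d', hχ ▸ walk', fun hdesc => ?_⟩
      exact .of_notMem (hχ ▸ notMem) (HasDescendantIn.map hmap hdesc) d'
    · exact ⟨_, true, walk'.cons_in (hmap edge hχ) notMem, HasDescendantIn.map hmap⟩
  | @cons_out u w _ _ _ edge admits ih =>
    obtain ⟨l', d', walk', hadmits⟩ := ih
    by_cases hχ : χ w = χ u
    · exact ⟨l', d', hχ ▸ walk', fun _ => hχ ▸ hadmits admits⟩
    · exact ⟨_, false, walk'.cons_out (hmap edge hχ) (hadmits admits), id⟩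

/-- In the second alternative the part of the walk in front of `w`, read from `w` on, is a directed
path to `u`. -/
theorem exists_suffix_of_mem {b u w : V} {l : List V} {d : Bool} (h : ActiveWalk E C b u l d)
    (hw : w ∈ l) :
    ∃ l' d', ActiveWalk E C b w l' d' ∧ w :: l' <:+ l ∧
      (AdmitsEdgeInto E C w d' ∨ w ∉ C ∧ Relation.TransGen E w u ∧ d = true) := by
  induction h with
  | nil => cases hw
  | @cons_in v u l d walk edge notMem ih =>
    rcases List.mem_cons.1 hw with rfl | hw
    · exact ⟨l, d, walk, List.suffix_rfl, .inr ⟨notMem, .single edge, rfl⟩⟩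
    · obtain ⟨l', d', walk', hsuffix, hcase⟩ := ih hw
      refine ⟨l', d', walk', hsuffix.trans (List.suffix_cons v l), hcase.imp_right ?_⟩
      rintro ⟨hwC, hwv, -⟩
      exact ⟨hwC, hwv.tail edge, rfl⟩
  | @cons_out v u l d walk edge admits ih =>
    rcases List.mem_cons.1 hw with rfl | hw
    · exact ⟨l, d, walk, List.suffix_rfl, .inl admits⟩
    · obtain ⟨l', d', walk', hsuffix, hcase⟩ := ih hw
      refine ⟨l', d', walk', hsuffix.trans (List.suffix_cons v l), .inl ?_⟩
      rcases hcase with hadmits | ⟨hwC, hwv, rfl⟩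
      · exact hadmits
      · exact .of_notMem hwC (.of_reflTransGen hwv.to_reflTransGen admits) d'

theorem exists_nodup_of_nodup_tail (hacyc : ∀ v, ¬ Relation.TransGen E v v)
    {b u : V} {l : List V} {d : Bool} (h : ActiveWalk E C b u l d) (hl : l.Nodup) :
    ∃ l' d', ActiveWalk E C b u l' d' ∧ (u :: l').Nodup ∧
      (AdmitsEdgeInto E C u d → AdmitsEdgeInto E C u d') := by
  by_cases hu : u ∈ l
  · obtain ⟨l', d', walk', hsuffix, hadmits | ⟨-, hcycle, -⟩⟩ := h.exists_suffix_of_mem hu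
    · exact ⟨l', d', walk', hsuffix.nodup hl, fun _ => hadmits⟩
    · exact absurd hcycle (hacyc u)
  · exact ⟨l, d, h, List.nodup_cons.2 ⟨hu, hl⟩, id⟩

theorem exists_nodup (hacyc : ∀ v, ¬ Relation.TransGen E v v)
    {b u : V} {l : List V} {d : Bool} (h : ActiveWalk E C b u l d) :
    ∃ l' d', ActiveWalk E C b u l' d' ∧ (u :: l').Nodup ∧
      (AdmitsEdgeInto E C u d → AdmitsEdgeInto E C u d') := by
  induction h with
  | nil => exact ⟨[], false, nil, List.nodup_singleton b, id⟩
  | cons_in _ edge notMem ih =>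
    obtain ⟨l', d', walk', hnodup, -⟩ := ih
    exact (walk'.cons_in edge notMem).exists_nodup_of_nodup_tail hacyc hnodup
  | cons_out _ edge admits ih =>
    obtain ⟨l', d', walk', hnodup, hadmits⟩ := ih
    exact (walk'.cons_out edge (hadmits admits)).exists_nodup_of_nodup_tail hacyc hnodup

theorem getLast?_eq {b u : V} {l : List V} {d : Bool} (h : ActiveWalk E C b u l d) :
    (u :: l).getLast? = some b := by
  induction h with
  | nil => rfl
  | cons_in _ _ _ ih => rwa [List.getLast?_cons_cons]
  | cons_out _ _ _ ih => rwa [List.getLast?_cons_cons]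

theorem flag_eq_true_iff (hasymm : ∀ v w, E v w → ¬ E w v) {b u v : V} {l : List V} {d : Bool}
    (h : ActiveWalk E C b u (v :: l) d) : d = true ↔ E v u := by
  cases h with
  | cons_in _ edge _ => exact iff_of_true rfl edge
  | cons_out _ edge _ => exact iff_of_false Bool.false_ne_true (hasymm _ _ edge)

end ActiveWalk

/-- The consecutive vertices `x, y, z` of a walk do not block it at `y`. -/
def Unblocked (E : V → V → Prop) (C : Set V) (x y z : V) : Prop :=
  (E x y ∧ E z y → HasDescendantIn E C y) ∧ (¬ (E x y ∧ E z y) → y ∉ C)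

theorem unblocked_iff_admitsEdgeInto {x y z : V} {d : Bool} (hxy : E x y)
    (hd : d = true ↔ E z y) : Unblocked E C x y z ↔ AdmitsEdgeInto E C y d := by
  cases d <;> simp_all [Unblocked, AdmitsEdgeInto]

theorem unblocked_iff_notMem {x y z : V} (hxy : ¬ E x y) : Unblocked E C x y z ↔ y ∉ C := by
  simp only [Unblocked, hxy, false_and, false_imp_iff, true_and, not_false_eq_true,
    true_imp_iff]

/-- The adjacency and activity conditions on a list of vertices in `ActiveBetween`. -/
def IsActiveList (E : V → V → Prop) (C : Set V) (p : List V) : Prop :=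
  (∀ i, ∀ h : i + 1 < p.length, E p[i] p[i + 1] ∨ E p[i + 1] p[i]) ∧
  (∀ i, ∀ h : i + 2 < p.length, Unblocked E C p[i] p[i + 1] p[i + 2])

theorem isActiveList_singleton (x : V) : IsActiveList E C [x] := by
  simp [IsActiveList]

theorem isActiveList_pair {x y : V} : IsActiveList E C [x, y] ↔ E x y ∨ E y x := by
  constructor
  · exact fun h => h.1 0 (by simp)
  · refine fun hxy => ⟨?_, by simp⟩
    rintro (_ | i) hi
    exacts [hxy, absurd hi (by simp)]

theorem isActiveList_cons_cons_cons {x y z : V} {l : List V} :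
    IsActiveList E C (x :: y :: z :: l) ↔
      (E x y ∨ E y x) ∧ Unblocked E C x y z ∧ IsActiveList E C (y :: z :: l) := by
  constructor
  · rintro ⟨hadj, hopen⟩
    exact ⟨hadj 0 (by simp), hopen 0 (by simp), fun i hi => hadj (i + 1) (by simpa using hi),
      fun i hi => hopen (i + 1) (by simpa using hi)⟩
  · rintro ⟨hxy, hxyz, hadj, hopen⟩
    constructor
    · rintro (_ | i) hi
      exacts [hxy, hadj i (by simpa using hi)]
    · rintro (_ | i) hi
      exacts [hxyz, hopen i (by simpa using hi)]

theorem ActiveWalk.isActiveList (hasymm : ∀ v w, E v w → ¬ E w v)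
    {b u : V} {l : List V} {d : Bool} (h : ActiveWalk E C b u l d) : IsActiveList E C (u :: l) := by
  induction h with
  | nil => exact isActiveList_singleton b
  | @cons_in u w l _ walk edge notMem ih =>
    cases l with
    | nil => exact isActiveList_pair.2 (.inr edge)
    | cons v l =>
      have hopen : Unblocked E C w u v := (unblocked_iff_notMem (hasymm _ _ edge)).2 notMem
      exact isActiveList_cons_cons_cons.2 ⟨.inr edge, hopen, ih⟩
  | @cons_out u w l _ walk edge admits ih =>
    cases l with
    | nil => exact isActiveList_pair.2 (.inl edge)
    | cons v l =>
      have hopen : Unblocked E C w u v :=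
        (unblocked_iff_admitsEdgeInto edge (walk.flag_eq_true_iff hasymm)).2 admits
      exact isActiveList_cons_cons_cons.2 ⟨.inl edge, hopen, ih⟩

theorem IsActiveList.exists_activeWalk (hasymm : ∀ v w, E v w → ¬ E w v) {b : V} (hb : b ∉ C)
    {l : List V} : ∀ {u : V}, IsActiveList E C (u :: l) → (u :: l).getLast? = some b →
      ∃ d, ActiveWalk E C b u l d := by
  induction l with
  | nil =>
    intro u _ hlast
    obtain rfl : u = b := Option.some.inj hlast
    exact ⟨false, .nil⟩
  | cons v l ih =>
    intro u hactive hlast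
    rw [List.getLast?_cons_cons] at hlast
    cases l with
    | nil =>
      obtain rfl : v = b := Option.some.inj hlast
      rcases isActiveList_pair.1 hactive with huv | hvu
      · exact ⟨false, .cons_out .nil huv hb⟩
      · exact ⟨true, .cons_in .nil hvu hb⟩
    | cons w l =>
      obtain ⟨hadj, hopen, htail⟩ := isActiveList_cons_cons_cons.1 hactive
      obtain ⟨d, walk⟩ := ih htail hlast
      rcases hadj with huv | hvu
      · have hflag := walk.flag_eq_true_iff hasymm
        exact ⟨false, walk.cons_out huv ((unblocked_iff_admitsEdgeInto huv hflag).1 hopen)⟩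
      · exact ⟨true, walk.cons_in hvu ((unblocked_iff_notMem (hasymm _ _ hvu)).1 hopen)⟩

theorem ActiveBetween.exists_activeWalk (hasymm : ∀ v w, E v w → ¬ E w v) {a b : V}
    (h : ActiveBetween E C a b) : ∃ l d, ActiveWalk E C b a l d := by
  obtain ⟨-, hb, p, -, -, hhead, hlast, hactive⟩ := h
  obtain ⟨l, rfl⟩ := List.head?_eq_some_iff.1 hhead
  exact ⟨l, IsActiveList.exists_activeWalk hasymm hb hactive hlast⟩

theorem ActiveWalk.activeBetween (hacyc : ∀ v, ¬ Relation.TransGen E v v)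
    {a b : V} {l : List V} {d : Bool} (h : ActiveWalk E C b a l d) (hab : a ≠ b)
    (ha : a ∉ C) (hb : b ∉ C) : ActiveBetween E C a b := by
  have hasymm : ∀ v w, E v w → ¬ E w v := fun v _ hvw hwv => hacyc v (.tail (.single hvw) hwv)
  obtain ⟨l', d', walk, hnodup, -⟩ := h.exists_nodup hacyc
  have hlength : 2 ≤ (a :: l').length := by
    cases walk with
    | nil => exact absurd rfl hab
    | cons_in | cons_out => simp
  exact ⟨ha, hb, a :: l', hlength, hnodup, rfl, walk.getLast?_eq, walk.isActiveList hasymm⟩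

theorem coarsening_dconnection_pushforward_general
    (hasymm : ∀ v w, E v w → ¬ E w v) (hacyc' : ∀ x, ¬ Relation.TransGen E' x x) {χ : V → V'}
    (hmap : ∀ ⦃v w⦄, E v w → χ v ≠ χ w → E' (χ v) (χ w)) {a b : V}
    (hcon : ActiveBetween E (χ ⁻¹' C') a b) (hab : χ a ≠ χ b) :
    ActiveBetween E' C' (χ a) (χ b) := by
  obtain ⟨l, d, walk⟩ := hcon.exists_activeWalk hasymm
  obtain ⟨l', d', walk', -⟩ := walk.map hmap
  exact walk'.activeBetween hacyc' hab hcon.1 hcon.2.1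

end

/-- if `G'` is a coarsening of the finite DAG `G` with surjection `χ`, `C' ⊆ V'`
and `C = χ⁻¹(C')`, then d-connection of `a` and `b` given `C` in `G` implies d-connection of
`χ(a)` and `χ(b)` given `C'` in `G'`, provided `χ(a) ≠ χ(b)` and `χ(a), χ(b) ∉ C'`. -/
theorem coarsening_dconnection_pushforward
    {V V' : Type*} [Fintype V] [Fintype V']
    (E : V → V → Prop) (E' : V' → V' → Prop)
    (hacyc : ∀ v, ¬ Relation.TransGen E v v)
    (hacyc' : ∀ x, ¬ Relation.TransGen E' x x)
    (χ : V → V') (hχ : Function.Surjective χ)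
    (hE' : ∀ x y, E' x y ↔ ∃ v w, E v w ∧ χ v ≠ χ w ∧ χ v = x ∧ χ w = y)
    (C' : Set V') (a b : V)
    (hcon : ActiveBetween E (χ ⁻¹' C') a b)
    (hab : χ a ≠ χ b) (haC : χ a ∉ C') (hbC : χ b ∉ C') :
    ActiveBetween E' C' (χ a) (χ b) :=
  coarsening_dconnection_pushforward_general
    (fun v _ hvw hwv => hacyc v (.tail (.single hvw) hwv)) hacyc'
    (fun v w hvw hne => (hE' _ _).2 ⟨v, w, hvw, hne, rfl, rfl⟩) hcon hab
end

section
/- Let G = (V,E) be a finite DAG and let Π_A and Π_B be valid coarsening partitions of G. Then the partition of V whose parts are the nonempty intersections U ∩ W with U ∈ Π_A and W ∈ Π_B (the common refinement, i.e., the meet of Π_A and Π_B in the partition refinement lattice) is also a valid coarsening partition of G. -/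
/-- The quotient-graph edge relation induced by `E` on the parts of `P`. -/
def QuotRel {V : Type*} (E : V → V → Prop) (P : Set (Set V)) (π ρ : Set V) : Prop :=
  π ∈ P ∧ ρ ∈ P ∧ π ≠ ρ ∧ ∃ v ∈ π, ∃ w ∈ ρ, E v w

/-- `P` is a valid coarsening partition of the DAG with edges `E`:
a partition of `V` whose quotient graph is acyclic. -/
def ValidCoarsening {V : Type*} (E : V → V → Prop) (P : Set (Set V)) : Prop :=
  Setoid.IsPartition P ∧ ∀ π, ¬ Relation.TransGen (QuotRel E P) π π

/-- `P` refines `Q`: every part of `P` is contained in some part of `Q`. -/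
def Refines {V : Type*} (P Q : Set (Set V)) : Prop :=
  ∀ π ∈ P, ∃ ρ ∈ Q, π ⊆ ρ

/-- The common refinement of two partitions: the nonempty intersections of their parts. -/
def CommonRefinement {V : Type*} (P Q : Set (Set V)) : Set (Set V) :=
  {s | s.Nonempty ∧ ∃ U ∈ P, ∃ W ∈ Q, s = U ∩ W}

/-!
If `C` refines `P`, sending each part of `C` to a part of `P` containing it turns a quotient edge of
`C` into a quotient edge of `P` or collapses it. When the quotient by `P` is acyclic, every edge on
a cycle of the quotient by `C` must therefore collapse, so its two endpoints lie in a common part of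
`P`. But a part of the common refinement of `P` and `Q` is determined by the part of `P` and the
part of `Q` that contain it, so the common refinement has no such edge.
-/

open Relation

section

variable {V : Type*} {E : V → V → Prop} {C P Q : Set (Set V)}

/-- Acyclicity of the quotient graph on an arbitrary family `P` of sets, which for a partition is
the second component of `ValidCoarsening`. -/
def AcyclicQuotient (E : V → V → Prop) (P : Set (Set V)) : Prop :=
  ∀ π, ¬ TransGen (QuotRel E P) π π

theorem QuotRel.reflGen_of_subset {s t U W : Set V} (hst : QuotRel E C s t) (hU : U ∈ P)
    (hW : W ∈ P) (hsU : s ⊆ U) (htW : t ⊆ W) : ReflGen (QuotRel E P) U W := by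
  obtain ⟨-, -, -, v, hv, w, hw, hvw⟩ := hst
  obtain rfl | hUW := eq_or_ne U W
  · exact .refl
  · exact .single ⟨hU, hW, hUW, v, hsU hv, w, htW hw, hvw⟩

theorem AcyclicQuotient.exists_superset_of_cycle (hP : AcyclicQuotient E P) (hCP : Refines C P)
    {s t : Set V} (hst : QuotRel E C s t) (hts : ReflTransGen (QuotRel E C) t s) :
    ∃ U ∈ P, s ⊆ U ∧ t ⊆ U := by
  choose! f hfP hsub using hCP
  have map_edge (a b : Set V) (hab : QuotRel E C a b) : ReflGen (QuotRel E P) (f a) (f b) :=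
    hab.reflGen_of_subset (hfP a hab.1) (hfP b hab.2.1) (hsub a hab.1) (hsub b hab.2.1)
  have map_path : ReflTransGen (QuotRel E P) (f t) (f s) :=
    ReflTransGen.lift' f (fun a b hab ↦ (map_edge a b hab).to_reflTransGen) _ _ hts
  have collapse : f t = f s := ((reflGen_iff ..).1 (map_edge s t hst)).resolve_right
    fun hedge ↦ hP (f s) (.head' hedge map_path)
  exact ⟨f s, hfP s hst.1, hsub s hst.1, collapse ▸ hsub t hst.2.1⟩

theorem AcyclicQuotient.of_refines {𝓢 : Set (Set (Set V))} (hacyc : ∀ P ∈ 𝓢, AcyclicQuotient E P)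
    (href : ∀ P ∈ 𝓢, Refines C P)
    (hsep : ∀ s ∈ C, ∀ t ∈ C, (∀ P ∈ 𝓢, ∃ U ∈ P, s ⊆ U ∧ t ⊆ U) → s = t) :
    AcyclicQuotient E C := by
  intro s hcycle
  obtain ⟨t, hst, hts⟩ := TransGen.head'_iff.1 hcycle
  have ⟨hs, ht, hne, _⟩ := hst
  exact hne <| hsep s hs t ht fun P hP ↦
    (hacyc P hP).exists_superset_of_cycle (href P hP) hst hts

theorem commonRefinement_refines_left : Refines (CommonRefinement P Q) P := by
  rintro _ ⟨-, U, hU, W, -, rfl⟩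
  exact ⟨U, hU, Set.inter_subset_left⟩

theorem commonRefinement_refines_right : Refines (CommonRefinement P Q) Q := by
  rintro _ ⟨-, U, -, W, hW, rfl⟩
  exact ⟨W, hW, Set.inter_subset_right⟩

theorem eq_inter_of_mem_commonRefinement (hP : P.PairwiseDisjoint id) (hQ : Q.PairwiseDisjoint id)
    {s U W : Set V} (hs : s ∈ CommonRefinement P Q) (hU : U ∈ P) (hW : W ∈ Q) {x : V}
    (hxs : x ∈ s) (hxU : x ∈ U) (hxW : x ∈ W) : s = U ∩ W := by
  obtain ⟨-, U', hU', W', hW', rfl⟩ := hs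
  rw [hP.elim_set hU' hU x hxs.1 hxU, hQ.elim_set hW' hW x hxs.2 hxW]

theorem isPartition_commonRefinement (hP : Setoid.IsPartition P) (hQ : Setoid.IsPartition Q) :
    Setoid.IsPartition (CommonRefinement P Q) := by
  refine ⟨fun hempty ↦ Set.not_nonempty_empty hempty.1, fun x ↦ ?_⟩
  obtain ⟨U, hU, hxU⟩ := (hP.2 x).exists
  obtain ⟨W, hW, hxW⟩ := (hQ.2 x).exists
  refine ⟨U ∩ W, ⟨⟨⟨x, hxU, hxW⟩, U, hU, W, hW, rfl⟩, hxU, hxW⟩, fun s ⟨hs, hxs⟩ ↦ ?_⟩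
  exact eq_inter_of_mem_commonRefinement hP.pairwiseDisjoint hQ.pairwiseDisjoint
    hs hU hW hxs hxU hxW

theorem eq_of_mem_commonRefinement_of_subset (hP : P.PairwiseDisjoint id)
    (hQ : Q.PairwiseDisjoint id) {s t : Set V} (hs : s ∈ CommonRefinement P Q)
    (ht : t ∈ CommonRefinement P Q) (hstP : ∃ U ∈ P, s ⊆ U ∧ t ⊆ U)
    (hstQ : ∃ W ∈ Q, s ⊆ W ∧ t ⊆ W) : s = t := by
  obtain ⟨U, hU, hsU, htU⟩ := hstP
  obtain ⟨W, hW, hsW, htW⟩ := hstQ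
  obtain ⟨x, hx⟩ := hs.1
  obtain ⟨y, hy⟩ := ht.1
  calc
    s = U ∩ W := eq_inter_of_mem_commonRefinement hP hQ hs hU hW hx (hsU hx) (hsW hx)
    _ = t := (eq_inter_of_mem_commonRefinement hP hQ ht hU hW hy (htU hy) (htW hy)).symm

theorem AcyclicQuotient.commonRefinement (hP : AcyclicQuotient E P) (hQ : AcyclicQuotient E Q)
    (hPdisj : P.PairwiseDisjoint id) (hQdisj : Q.PairwiseDisjoint id) :
    AcyclicQuotient E (CommonRefinement P Q) := by
  refine .of_refines (𝓢 := {P, Q}) ?_ ?_ fun s hs t ht hcommon ↦ ?_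
  · rintro _ (rfl | rfl)
    exacts [hP, hQ]
  · rintro _ (rfl | rfl)
    exacts [commonRefinement_refines_left, commonRefinement_refines_right]
  · exact eq_of_mem_commonRefinement_of_subset hPdisj hQdisj hs ht
      (hcommon P (.inl rfl)) (hcommon Q (.inr rfl))

theorem commonRefinement_validCoarsening_general (hP : ValidCoarsening E P)
    (hQ : ValidCoarsening E Q) : ValidCoarsening E (CommonRefinement P Q) := by
  obtain ⟨hPpart, hPacyc⟩ := hP
  obtain ⟨hQpart, hQacyc⟩ := hQ
  exact ⟨isPartition_commonRefinement hPpart hQpart,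
    AcyclicQuotient.commonRefinement hPacyc hQacyc
      hPpart.pairwiseDisjoint hQpart.pairwiseDisjoint⟩

end

/-- the common refinement (lattice meet) of two valid coarsening partitions
of a finite DAG is again a valid coarsening partition. -/
theorem commonRefinement_validCoarsening
    {V : Type*} [Fintype V] (E : V → V → Prop)
    (hacyc : ∀ v, ¬ Relation.TransGen E v v)
    (PA PB : Set (Set V))
    (hA : ValidCoarsening E PA) (hB : ValidCoarsening E PB) :
    ValidCoarsening E (CommonRefinement PA PB) := by
  exact commonRefinement_validCoarsening_general hA hB
end

section
/- Let G = (V,E) be a finite DAG. The set of valid coarsening partitions of G, ordered by refinement, is a lattice: the meet of two valid coarsening partitions is their common refinement (their meet in the partition refinement lattice), and the one-part partition {V} is the top element. -/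
/-!
Partitions of `V` correspond to equivalence relations on `V`, refinement becoming inclusion. A
partition is a valid coarsening exactly when its equivalence relation is `x ≤ y ∧ y ≤ x` for some
preorder on `V` containing `E`: given an acyclic quotient, take reachability between parts;
conversely, a quotient edge is a strict inequality for such a preorder, so it lies on no cycle.
Preorders containing `E` are closed under arbitrary intersections, hence so are these equivalence
relations. This gives binary meets, the top element (the empty intersection), and joins as
intersections of all upper bounds.
-/

open Relation

section PreorderKernel

variable {V : Type*} {E : V → V → Prop}

/-- `r` is the symmetric kernel `x ≤ y ∧ y ≤ x` of some preorder on `V` containing the relation `E`.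
These are the equivalence relations whose classes form a valid coarsening partition. The preorder is
existentially quantified rather than fixed as the one generated by `E` and `r`, so that
intersections can be formed preorder by preorder. -/
def IsPreorderKernel (E : V → V → Prop) (r : Setoid V) : Prop :=
  ∃ _ : Preorder V, (∀ x y, E x y → x ≤ y) ∧ AntisymmRel.setoid V (· ≤ ·) = r

lemma IsPreorderKernel.sInf {S : Set (Setoid V)} (hS : ∀ r ∈ S, IsPreorderKernel E r) :
    IsPreorderKernel E (sInf S) := by
  let inter : Preorder V :=
    { le x y := ∀ p : Preorder V, (∀ a b, E a b → a ≤ b) →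
        AntisymmRel.setoid V (· ≤ ·) ∈ S → p.le x y
      le_refl x p _ _ := p.le_refl x
      le_trans x y z hxy hyz p hE hp := p.le_trans x y z (hxy p hE hp) (hyz p hE hp) }
  refine ⟨inter, fun x y hxy p hE _ => hE x y hxy, Setoid.ext fun x y => ?_⟩
  rw [Setoid.sInf_iff]
  constructor
  · rintro ⟨hxy, hyx⟩ r hr
    obtain ⟨p, hE, rfl⟩ := hS r hr
    exact ⟨hxy p hE hr, hyx p hE hr⟩
  · exact fun h => ⟨fun p _ hp => (h _ hp).1, fun p _ hp => (h _ hp).2⟩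

lemma IsPreorderKernel.inf {r s : Setoid V} (hr : IsPreorderKernel E r)
    (hs : IsPreorderKernel E s) : IsPreorderKernel E (r ⊓ s) := by
  rw [← sInf_pair]
  exact .sInf (by simp [hr, hs])

lemma isPreorderKernel_top : IsPreorderKernel E ⊤ := by
  rw [← sInf_empty]
  exact .sInf (by simp)

end PreorderKernel

section QuotientGraph

variable {V : Type*} {E : V → V → Prop}

lemma QuotRel.lt [Preorder V] (hE : ∀ x y, E x y → x ≤ y) {π ρ : Set V}
    (h : QuotRel E (AntisymmRel.setoid V (· ≤ ·)).classes π ρ) {x y : V} (hx : x ∈ π)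
    (hy : y ∈ ρ) : x < y := by
  obtain ⟨⟨a, rfl⟩, ⟨b, rfl⟩, hne, v, hv, w, hw, hvw⟩ := h
  have hxy : x ≤ y := calc
    x ≤ a := hx.1
    _ ≤ v := hv.2
    _ ≤ w := hE v w hvw
    _ ≤ b := hw.1
    _ ≤ y := hy.2
  refine lt_of_le_not_ge hxy fun hyx => hne ?_
  exact Setoid.eq_of_mem_classes ⟨a, rfl⟩ hx ⟨b, rfl⟩ (AntisymmRel.trans ⟨hxy, hyx⟩ hy)

lemma lt_of_transGen_quotRel [Preorder V] (hE : ∀ x y, E x y → x ≤ y) {π ρ : Set V}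
    (h : TransGen (QuotRel E (AntisymmRel.setoid V (· ≤ ·)).classes) π ρ) {x y : V}
    (hx : x ∈ π) (hy : y ∈ ρ) : x < y := by
  induction h generalizing y with
  | single h => exact h.lt hE hx hy
  | tail _ h ih =>
    have ⟨_, _, _, v, hv, _⟩ := h
    exact (ih hv).trans (h.lt hE hv hy)

lemma IsPreorderKernel.validCoarsening_classes {r : Setoid V} (hr : IsPreorderKernel E r) :
    ValidCoarsening E r.classes := by
  obtain ⟨_, hE, rfl⟩ := hr
  refine ⟨Setoid.isPartition_classes _, fun π hcycle => ?_⟩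
  obtain ⟨_, ⟨-, -, -, x, hx, -⟩, -⟩ := TransGen.head'_iff.1 hcycle
  exact lt_irrefl x (lt_of_transGen_quotRel hE hcycle hx hx)

lemma ValidCoarsening.isPreorderKernel {r : Setoid V} (hr : ValidCoarsening E r.classes) :
    IsPreorderKernel E r := by
  let part (x : V) : Set V := {z | r z x}
  have part_eq_iff {x y : V} : part x = part y ↔ r x y :=
    ⟨fun h => h.subset (r.refl x), fun h => Set.ext fun z =>
      ⟨fun hz => r.trans hz h, fun hz => r.trans hz (r.symm h)⟩⟩
  let reach : Preorder V :=
    { le x y := ReflTransGen (QuotRel E r.classes) (part x) (part y)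
      le_refl _ := .refl
      le_trans _ _ _ := .trans }
  have reach_of_part_eq {x y : V} (h : part x = part y) : reach.le x y :=
    reflTransGen_iff_eq_or_transGen.2 (.inl h.symm)
  refine ⟨reach, fun x y hxy => ?_, Setoid.ext fun x y => ⟨?_, fun h => ?_⟩⟩
  · by_cases hpart : part x = part y
    · exact reach_of_part_eq hpart
    · exact .single ⟨r.mem_classes x, r.mem_classes y, hpart, x, r.refl x, y, r.refl y, hxy⟩
  · rintro ⟨hxy, hyx⟩
    rcases reflTransGen_iff_eq_or_transGen.1 hxy with heq | hlt
    · exact part_eq_iff.1 heq.symm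
    · exact absurd (hlt.trans_left hyx) (hr.2 _)
  · exact ⟨reach_of_part_eq (part_eq_iff.2 h), reach_of_part_eq (part_eq_iff.2 h).symm⟩

lemma ValidCoarsening.exists_classes_eq {P : Set (Set V)} (hP : ValidCoarsening E P) :
    ∃ r : Setoid V, IsPreorderKernel E r ∧ r.classes = P := by
  have hclasses := Setoid.classes_mkClasses P hP.1
  exact ⟨Setoid.mkClasses P hP.1.2, (hclasses.symm ▸ hP).isPreorderKernel, hclasses⟩

end QuotientGraph

section Refinement

variable {V : Type*}

lemma refines_classes_iff {r s : Setoid V} : Refines r.classes s.classes ↔ r ≤ s := by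
  constructor
  · intro h x y hxy
    obtain ⟨ρ, hρ, hsub⟩ := h _ (r.mem_classes y)
    exact s.rel_iff_exists_classes.2 ⟨ρ, hρ, hsub hxy, hsub (r.refl y)⟩
  · rintro h _ ⟨y, rfl⟩
    exact ⟨_, s.mem_classes y, fun x hxy => h hxy⟩

lemma commonRefinement_classes (r s : Setoid V) :
    CommonRefinement r.classes s.classes = (r ⊓ s).classes := by
  ext π
  constructor
  · rintro ⟨hne, U, hU, W, hW, rfl⟩
    obtain ⟨x, hxr, hxs⟩ := hne
    rw [Setoid.eq_of_mem_classes hU hxr (r.mem_classes x) (r.refl x),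
      Setoid.eq_of_mem_classes hW hxs (s.mem_classes x) (s.refl x)]
    exact (r ⊓ s).mem_classes x
  · rintro ⟨x, rfl⟩
    exact ⟨⟨x, (r ⊓ s).refl x⟩, _, r.mem_classes x, _, s.mem_classes x, rfl⟩

lemma classes_top [Nonempty V] : (⊤ : Setoid V).classes = {Set.univ} := by
  ext π
  simp [Setoid.classes, Setoid.top_def]

end Refinement

theorem validCoarsenings_lattice_general
    {V : Type*} [Nonempty V] (E : V → V → Prop) :
    (∀ PA PB : Set (Set V), ValidCoarsening E PA → ValidCoarsening E PB →
      ValidCoarsening E (CommonRefinement PA PB) ∧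
      Refines (CommonRefinement PA PB) PA ∧
      Refines (CommonRefinement PA PB) PB ∧
      ∀ Q, ValidCoarsening E Q → Refines Q PA → Refines Q PB →
        Refines Q (CommonRefinement PA PB)) ∧
    (∀ PA PB : Set (Set V), ValidCoarsening E PA → ValidCoarsening E PB →
      ∃ J, ValidCoarsening E J ∧ Refines PA J ∧ Refines PB J ∧
        ∀ Q, ValidCoarsening E Q → Refines PA Q → Refines PB Q → Refines J Q) ∧
    ValidCoarsening E {Set.univ} ∧
    (∀ P, ValidCoarsening E P → Refines P {Set.univ}) := by
  refine ⟨fun PA PB hA hB => ?_, fun PA PB hA hB => ?_,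
    classes_top (V := V) ▸ isPreorderKernel_top.validCoarsening_classes,
    fun _ _ π _ => ⟨Set.univ, rfl, π.subset_univ⟩⟩
  all_goals
    obtain ⟨r, hr, rfl⟩ := hA.exists_classes_eq
    obtain ⟨s, hs, rfl⟩ := hB.exists_classes_eq
  · rw [commonRefinement_classes]
    refine ⟨(hr.inf hs).validCoarsening_classes, refines_classes_iff.2 inf_le_left,
      refines_classes_iff.2 inf_le_right, fun Q hQ hQr hQs => ?_⟩
    obtain ⟨t, -, rfl⟩ := hQ.exists_classes_eq
    exact refines_classes_iff.2 (le_inf (refines_classes_iff.1 hQr) (refines_classes_iff.1 hQs))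
  · let join := sInf {t | IsPreorderKernel E t ∧ r ≤ t ∧ s ≤ t}
    have hjoin : IsPreorderKernel E join := .sInf fun _ ht => ht.1
    refine ⟨join.classes, hjoin.validCoarsening_classes,
      refines_classes_iff.2 (le_sInf fun _ ht => ht.2.1),
      refines_classes_iff.2 (le_sInf fun _ ht => ht.2.2), fun Q hQ hrQ hsQ => ?_⟩
    obtain ⟨t, ht, rfl⟩ := hQ.exists_classes_eq
    exact refines_classes_iff.2
      (sInf_le ⟨ht, refines_classes_iff.1 hrQ, refines_classes_iff.1 hsQ⟩)

/-- the set of valid coarsening partitions of a finite DAG, ordered by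
refinement, is a lattice: the meet of two valid coarsening partitions is their common
refinement (their meet in the partition refinement lattice), joins exist, and the
one-part partition `{V}` is the top element. -/
theorem validCoarsenings_lattice
    {V : Type*} [Fintype V] [Nonempty V] (E : V → V → Prop)
    (hacyc : ∀ v, ¬ Relation.TransGen E v v) :
    (∀ PA PB : Set (Set V), ValidCoarsening E PA → ValidCoarsening E PB →
      ValidCoarsening E (CommonRefinement PA PB) ∧
      Refines (CommonRefinement PA PB) PA ∧
      Refines (CommonRefinement PA PB) PB ∧
      ∀ Q, ValidCoarsening E Q → Refines Q PA → Refines Q PB →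
        Refines Q (CommonRefinement PA PB)) ∧
    (∀ PA PB : Set (Set V), ValidCoarsening E PA → ValidCoarsening E PB →
      ∃ J, ValidCoarsening E J ∧ Refines PA J ∧ Refines PB J ∧
        ∀ Q, ValidCoarsening E Q → Refines PA Q → Refines PB Q → Refines J Q) ∧
    ValidCoarsening E {Set.univ} ∧
    (∀ P, ValidCoarsening E P → Refines P {Set.univ}) :=
  validCoarsenings_lattice_general E
end

section
/- Let G = (V,E) be a finite DAG, let Π be a valid coarsening partition of G, and let π ∈ Π. If (v_0, v_1, …, v_m) is a directed path in G (v_{i} → v_{i+1} ∈ E for every i) with v_0 ∈ π and v_m ∈ π, then v_i ∈ π for every i; that is, every part of a valid coarsening partition is convex with respect to directed paths. -/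
theorem reflTransGen_of_forall_succ {V : Type*} {E : V → V → Prop} {v : ℕ → V} {i j : ℕ}
    (hij : i ≤ j) (hstep : ∀ k ∈ Set.Ico i j, E (v k) (v (k + 1))) :
    Relation.ReflTransGen E (v i) (v j) :=
  (reflTransGen_of_succ_of_le (fun k l => E (v k) (v l)) hstep hij).lift v fun _ _ => id

section QuotientWalks

variable {V : Type*} {E : V → V → Prop} {P : Set (Set V)} {π ρ : Set V} {x y z : V}

theorem QuotRel.reflGen_of_edge (hπ : π ∈ P) (hρ : ρ ∈ P) (hx : x ∈ π) (hy : y ∈ ρ)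
    (hxy : E x y) : Relation.ReflGen (QuotRel E P) π ρ := by
  by_cases hne : π = ρ
  · exact hne ▸ .refl
  · exact .single ⟨hπ, hρ, hne, x, hx, y, hy, hxy⟩

theorem QuotRel.reflTransGen_of_reflTransGen (hP : Setoid.IsPartition P) (hπ : π ∈ P)
    (hρ : ρ ∈ P) (hx : x ∈ π) (hy : y ∈ ρ) (hxy : Relation.ReflTransGen E x y) :
    Relation.ReflTransGen (QuotRel E P) π ρ := by
  induction hxy generalizing ρ with
  | refl => rw [(hP.2 x).unique ⟨hπ, hx⟩ ⟨hρ, hy⟩]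
  | @tail u _ _ huw ih =>
    obtain ⟨σ, ⟨hσ, hu⟩, -⟩ := hP.2 u
    exact (ih hσ hu).trans (reflGen_of_edge hσ hρ hu hy huw).to_reflTransGen

theorem validCoarsening_part_convex_general (hP : ValidCoarsening E P) (hπ : π ∈ P)
    (hx : x ∈ π) (hz : z ∈ π) (hxy : Relation.ReflTransGen E x y)
    (hyz : Relation.ReflTransGen E y z) : y ∈ π := by
  obtain ⟨hpart, hacyclic⟩ := hP
  obtain ⟨ρ, ⟨hρ, hy⟩, -⟩ := hpart.2 y
  have hπρ := QuotRel.reflTransGen_of_reflTransGen hpart hπ hρ hx hy hxy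
  have hρπ := QuotRel.reflTransGen_of_reflTransGen hpart hρ hπ hy hz hyz
  -- A path that leaves `π` and comes back projects to a cycle through `π` in the quotient.
  rcases Relation.reflTransGen_iff_eq_or_transGen.1 hπρ with rfl | hcycle
  · exact hy
  · exact absurd (hcycle.trans_left hρπ) (hacyclic π)

end QuotientWalks

/-- every part of a valid coarsening partition of a finite DAG is convex
with respect to directed paths: if a directed path starts and ends in a part `π`,
then all of its nodes lie in `π`. -/
theorem validCoarsening_part_convex
    {V : Type*} [Fintype V] (E : V → V → Prop)
    (hacyc : ∀ v, ¬ Relation.TransGen E v v)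
    (P : Set (Set V)) (hP : ValidCoarsening E P)
    (π : Set V) (hπ : π ∈ P)
    (m : ℕ) (v : ℕ → V)
    (hpath : ∀ i < m, E (v i) (v (i + 1)))
    (h0 : v 0 ∈ π) (hm : v m ∈ π) :
    ∀ i ≤ m, v i ∈ π := by
  intro i hi
  exact validCoarsening_part_convex_general hP hπ h0 hm
    (reflTransGen_of_forall_succ i.zero_le fun k hk => hpath k (hk.2.trans_le hi))
    (reflTransGen_of_forall_succ hi fun k hk => hpath k hk.2)
end

section
/- Let G = (V,E) be a finite DAG, let Π and Π* be valid coarsening partitions of G with Π* refining Π, and let π ∈ Π be a part that is the union π = ρ_1 ∪ … ∪ ρ_m of parts ρ_1, …, ρ_m ∈ Π* with m ≥ 2. Suppose ρ_1 is a source of the induced quotient subgraph on {ρ_1, …, ρ_m}, i.e., there is no edge v → w ∈ E with v ∈ ρ_j for some j ≥ 2 and w ∈ ρ_1. Then an_G(ρ_1) ∩ (π \ ρ_1) = ∅. -/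
/-!
A path of `G` projects to a path of the quotient graph. If a path left a part of a valid coarsening
and came back, its projection would be a closed walk through another part; so parts are path-convex,
and a path from a node of `π` to the source part stays inside `π`. Followed backwards from its end,
such a path could leave the source part only along an edge entering it from the rest of `π`.
-/

/-- Convexity of a set of nodes for reachability: a path with both endpoints in `A` stays in `A`.
This is `Set.OrdConnected` for the reachability preorder, stated for a bare relation. -/
def IsPathConvex {V : Type*} (E : V → V → Prop) (A : Set V) : Prop :=
  ∀ ⦃x y z⦄, x ∈ A → z ∈ A → Relation.ReflTransGen E x y → Relation.ReflTransGen E y z → y ∈ A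

lemma reflTransGen_antisymm_of_acyclic {α : Type*} {r : α → α → Prop}
    (hr : ∀ a, ¬ Relation.TransGen r a a) {a b : α} (hab : Relation.ReflTransGen r a b)
    (hba : Relation.ReflTransGen r b a) : a = b := by
  obtain heq | hab_trans := Relation.reflTransGen_iff_eq_or_transGen.1 hab
  · exact heq.symm
  · exact absurd (hab_trans.trans_left hba) (hr a)

section

variable {V : Type*} {E : V → V → Prop} {P : Set (Set V)} {A B S : Set V} {x y : V}

lemma reflGen_quotRel_of_edge (hA : A ∈ P) (hB : B ∈ P) (hx : x ∈ A) (hy : y ∈ B) (hxy : E x y) :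
    Relation.ReflGen (QuotRel E P) A B := by
  by_cases hAB : A = B
  · exact hAB ▸ .refl
  · exact .single ⟨hA, hB, hAB, x, hx, y, hy, hxy⟩

lemma reflTransGen_quotRel (hP : Setoid.IsPartition P) (hA : A ∈ P) (hB : B ∈ P) (hx : x ∈ A)
    (hy : y ∈ B) (hxy : Relation.ReflTransGen E x y) :
    Relation.ReflTransGen (QuotRel E P) A B := by
  induction hxy generalizing B with
  | refl => rw [Setoid.eq_of_mem_eqv_class hP.2 hA hx hB hy]
  | tail _ hedge ih =>
    obtain ⟨C, ⟨hC, hmem⟩, -⟩ := hP.2 _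
    exact (ih hC hmem).trans (reflGen_quotRel_of_edge hC hB hmem hy hedge).to_reflTransGen

lemma ValidCoarsening.isPathConvex (hP : ValidCoarsening E P) (hA : A ∈ P) :
    IsPathConvex E A := by
  intro x y z hx hz hxy hyz
  obtain ⟨B, ⟨hB, hy⟩, -⟩ := hP.1.2 y
  have hAB : A = B := reflTransGen_antisymm_of_acyclic hP.2
    (reflTransGen_quotRel hP.1 hA hB hx hy hxy) (reflTransGen_quotRel hP.1 hB hA hy hz hyz)
  rwa [hAB]

lemma IsPathConvex.mem_of_reflTransGen (hA : IsPathConvex E A) (hSA : S ⊆ A)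
    (hsource : ∀ v ∈ A \ S, ∀ w ∈ S, ¬ E v w) (hx : x ∈ A) (hy : y ∈ S)
    (hxy : Relation.ReflTransGen E x y) : x ∈ S := by
  induction hxy using Relation.ReflTransGen.head_induction_on with
  | refl => exact hy
  | head hedge hpath ih =>
    have hnext := ih (hA hx (hSA hy) (.single hedge) hpath)
    by_contra hxS
    exact hsource _ ⟨hx, hxS⟩ _ hnext hedge

end

theorem source_part_no_ancestors_in_rest_general {V : Type*} {ι : Sort*} {E : V → V → Prop}
    {P : Set (Set V)} (hP : ValidCoarsening E P) {ρ : ι → Set V} (hρ : ⋃ j, ρ j ∈ P) (i : ι)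
    (hsource : ∀ j ≠ i, ∀ v ∈ ρ j, ∀ w ∈ ρ i, ¬ E v w) :
    {u : V | ∃ w ∈ ρ i, Relation.ReflTransGen E u w} ∩ ((⋃ j, ρ j) \ ρ i) = ∅ := by
  have hsource_rest : ∀ v ∈ (⋃ j, ρ j) \ ρ i, ∀ w ∈ ρ i, ¬ E v w := by
    rintro v ⟨hv, hvi⟩
    obtain ⟨j, hvj⟩ := Set.mem_iUnion.1 hv
    exact hsource j (fun hji => hvi (hji ▸ hvj)) v hvj
  rw [← Set.disjoint_iff_inter_eq_empty, Set.disjoint_left]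
  rintro u ⟨w, hw, huw⟩ ⟨hu, hui⟩
  exact hui <| (hP.isPathConvex hρ).mem_of_reflTransGen (Set.subset_iUnion ρ i) hsource_rest
    hu hw huw

/-- let `Π` and `Π*` be valid coarsening partitions of a finite DAG with
`Π*` refining `Π`, and let `π ∈ Π` be the union of parts `ρ ⟨0, by omega⟩, …, ρ (m-1)` of `Π*`
(with `m ≥ 2`). If `ρ ⟨0, by omega⟩` is a source of the induced quotient subgraph on these parts
(no edge of `G` goes from some `ρ j`, `j ≠ 0`, into `ρ ⟨0, by omega⟩`), then no node of
`π \ ρ ⟨0, by omega⟩` is an ancestor of `ρ ⟨0, by omega⟩`. -/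
theorem source_part_no_ancestors_in_rest
    {V : Type*} [Fintype V] (E : V → V → Prop)
    (hacyc : ∀ v, ¬ Relation.TransGen E v v)
    (P Pstar : Set (Set V))
    (hP : ValidCoarsening E P) (hPstar : ValidCoarsening E Pstar)
    (href : Refines Pstar P)
    (π : Set V) (hπ : π ∈ P)
    (m : ℕ) (hm : 2 ≤ m) (ρ : Fin m → Set V)
    (hρ : ∀ j, ρ j ∈ Pstar) (hρinj : Function.Injective ρ)
    (hunion : π = ⋃ j, ρ j)
    (hsource : ∀ j : Fin m, (j : ℕ) ≠ 0 → ∀ v ∈ ρ j, ∀ w ∈ ρ ⟨0, by omega⟩, ¬ E v w) :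
    {u : V | ∃ w ∈ ρ ⟨0, by omega⟩, Relation.ReflTransGen E u w} ∩ (π \ ρ ⟨0, by omega⟩) = ∅ := by
  subst hunion
  exact source_part_no_ancestors_in_rest_general hP hπ _ fun j hj =>
    hsource j fun hj_zero => hj (Fin.ext hj_zero)
end

section
/- Let G = (V,E) be a finite DAG, let Π and Π* be valid coarsening partitions of G with Π* refining Π, and let π ∈ Π be a part that is the union π = ρ_1 ∪ … ∪ ρ_m of parts ρ_1, …, ρ_m ∈ Π* with m ≥ 2. Suppose ρ_1 is a source of the induced quotient subgraph on {ρ_1, …, ρ_m}, i.e., there is no edge v → w ∈ E with v ∈ ρ_j for some j ≥ 2 and w ∈ ρ_1. Then the partition (Π \ {π}) ∪ {ρ_1, π \ ρ_1}, obtained from Π by splitting the part π into ρ_1 and π \ ρ_1, is again a valid coarsening partition of G. -/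
/-! Map every part of the split partition to the part of `P` that contains it. A cycle of the new
quotient graph becomes a closed walk in the quotient graph of `P`, which is acyclic; hence the walk
is constant and the cycle stays inside one part of `P`. That part must be `π`, as the others are not
subdivided, and inside `π` the only possible edge goes from the source `ρ 0` to `π \ ρ 0`. -/

open Relation

section Relation

variable {α β : Type*} {r : α → α → Prop} {s : β → β → Prop} {t : β → α → α → Prop}

theorem transGen_map_or_transGen_fiber (f : α → β)
    (h : ∀ x y, r x y → s (f x) (f y) ∨ f x = f y ∧ t (f x) x y) {x y : α} (hxy : TransGen r x y) :
    TransGen s (f x) (f y) ∨ f x = f y ∧ TransGen (t (f x)) x y := by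
  induction hxy with
  | single hxy => exact (h _ _ hxy).imp .single (And.imp_right .single)
  | tail _ hyz ih =>
    rcases ih with hs | ⟨hf, ht⟩ <;> rcases h _ _ hyz with hs' | ⟨hf', ht'⟩
    · exact .inl (hs.tail hs')
    · exact .inl (hf' ▸ hs)
    · exact .inl (.single (hf ▸ hs'))
    · exact .inr ⟨hf.trans hf', ht.tail (hf ▸ ht')⟩

end Relation

section Partition

variable {V : Type*} {P Q : Set (Set V)} {π σ τ : Set V}

theorem eq_of_subset_of_isPartition (hP : Setoid.IsPartition P) (hσ : σ ∈ P) (hτ : τ ∈ P)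
    (h : σ ⊆ τ) : σ = τ :=
  have ⟨_, hx⟩ := Setoid.nonempty_of_mem_partition hP hσ
  Setoid.eq_of_mem_eqv_class hP.2 hσ hx hτ (h hx)

theorem isPartition_sdiff_singleton_union (hP : Setoid.IsPartition P) (hπ : π ∈ P)
    (hQ : Q.PairwiseDisjoint id) (hempty : ∅ ∉ Q) (hQπ : ⋃₀ Q = π) :
    Setoid.IsPartition (P \ {π} ∪ Q) := by
  have hdisj : (P \ {π} ∪ Q).PairwiseDisjoint id := by
    refine Set.pairwiseDisjoint_union.2 ⟨hP.pairwiseDisjoint.subset Set.sdiff_subset, hQ, ?_⟩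
    intro σ hσ τ hτ _
    have hτπ : τ ⊆ π := hQπ ▸ Set.subset_sUnion_of_mem hτ
    exact (hP.pairwiseDisjoint hσ.1 hπ hσ.2).mono_right hτπ
  have hcover : ∀ x, ∃ σ ∈ P \ {π} ∪ Q, x ∈ σ := by
    intro x
    obtain ⟨σ, hσ, hx⟩ := (hP.2 x).exists
    by_cases hσπ : σ = π
    · obtain ⟨τ, hτ, hxτ⟩ : x ∈ ⋃₀ Q := by rwa [hQπ, ← hσπ]
      exact ⟨τ, .inr hτ, hxτ⟩
    · exact ⟨σ, .inl ⟨hσ, hσπ⟩, hx⟩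
  exact hdisj.isPartition_of_exists_of_ne_empty hcover fun h => h.elim (hP.1 ·.1) hempty

end Partition

section QuotientGraph

variable {V : Type*} {E : V → V → Prop} {P Q : Set (Set V)} {π A B : Set V}

/-- The quotient graph of `E` on the family `P` has no directed cycle. `P` need not cover `V`, so
that this also makes sense for the parts lying inside a single part of a coarser partition. -/
def QuotAcyclic (E : V → V → Prop) (P : Set (Set V)) : Prop :=
  ∀ σ, ¬ TransGen (QuotRel E P) σ σ

theorem quotAcyclic_pair (h : ∀ v ∈ B, ∀ w ∈ A, ¬ E v w) : QuotAcyclic E {A, B} := by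
  have hedge : ∀ σ τ, QuotRel E {A, B} σ τ → σ = A ∧ τ = B := by
    rintro σ τ ⟨rfl | rfl, rfl | rfl, hne, v, hv, w, hw, hvw⟩
    · exact absurd rfl hne
    · exact ⟨rfl, rfl⟩
    · exact absurd hvw (h v hv w hw)
    · exact absurd rfl hne
  intro σ hcycle
  obtain ⟨τ, hστ, -⟩ := TransGen.head'_iff.1 hcycle
  obtain ⟨υ, -, hυσ⟩ := TransGen.tail'_iff.1 hcycle
  exact hστ.2.2.1 ((hedge _ _ hυσ).2.trans (hedge _ _ hστ).2.symm)

theorem QuotAcyclic.of_refines (hP : QuotAcyclic E P) (href : Refines Q P)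
    (hfiber : ∀ π ∈ P, QuotAcyclic E {σ ∈ Q | σ ⊆ π}) : QuotAcyclic E Q := by
  choose! f hfP hsub using href
  have hedge : ∀ σ τ, QuotRel E Q σ τ →
      QuotRel E P (f σ) (f τ) ∨ f σ = f τ ∧ QuotRel E {υ ∈ Q | υ ⊆ f σ} σ τ := by
    rintro σ τ ⟨hσ, hτ, hne, v, hv, w, hw, hvw⟩
    by_cases hf : f σ = f τ
    · exact .inr ⟨hf, ⟨hσ, hsub σ hσ⟩, ⟨hτ, hf ▸ hsub τ hτ⟩, hne, v, hv, w, hw, hvw⟩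
    · exact .inl ⟨hfP σ hσ, hfP τ hτ, hf, v, hsub σ hσ hv, w, hsub τ hτ hw, hvw⟩
  intro σ hcycle
  obtain ⟨_, hστ, -⟩ := TransGen.head'_iff.1 hcycle
  rcases transGen_map_or_transGen_fiber (t := fun π => QuotRel E {υ ∈ Q | υ ⊆ π}) f hedge hcycle
    with hcoarse | ⟨-, hfine⟩
  · exact hP _ hcoarse
  · exact hfiber _ (hfP σ hστ.1) _ hfine

theorem ValidCoarsening.sdiff_singleton_union (hP : ValidCoarsening E P) (hπ : π ∈ P)
    (hQ : Q.PairwiseDisjoint id) (hempty : ∅ ∉ Q) (hQπ : ⋃₀ Q = π) (hacyclic : QuotAcyclic E Q) :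
    ValidCoarsening E (P \ {π} ∪ Q) := by
  have hpart : Setoid.IsPartition (P \ {π} ∪ Q) :=
    isPartition_sdiff_singleton_union hP.1 hπ hQ hempty hQπ
  have href : Refines (P \ {π} ∪ Q) P := by
    rintro σ (hσ | hσ)
    · exact ⟨σ, hσ.1, subset_rfl⟩
    · exact ⟨π, hπ, hQπ ▸ Set.subset_sUnion_of_mem hσ⟩
  refine ⟨hpart, QuotAcyclic.of_refines hP.2 href fun π' hπ' σ hcycle => ?_⟩
  have huniq : ∀ σ ∈ P \ {π}, σ ⊆ π' → ∀ τ ∈ P \ {π} ∪ Q, τ ⊆ π' → τ = σ := by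
    intro σ hσ hσπ' τ hτ hτπ'
    obtain rfl : σ = π' := eq_of_subset_of_isPartition hP.1 hσ.1 hπ' hσπ'
    exact eq_of_subset_of_isPartition hpart hτ (.inl hσ) hτπ'
  refine hacyclic σ (TransGen.mono ?_ _ _ hcycle)
  rintro σ τ ⟨⟨hσ, hσπ'⟩, ⟨hτ, hτπ'⟩, hne, hE⟩
  have hσQ : σ ∈ Q := hσ.resolve_left fun h => hne (huniq σ h hσπ' τ hτ hτπ').symm
  have hτQ : τ ∈ Q := hτ.resolve_left fun h => hne (huniq τ h hτπ' σ hσ hσπ')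
  exact ⟨hσQ, hτQ, hne, hE⟩

theorem ValidCoarsening.split (hP : ValidCoarsening E P) (hπ : π ∈ P) (hA : A.Nonempty)
    (hAπ : A ⊂ π) (hE : ∀ v ∈ π \ A, ∀ w ∈ A, ¬ E v w) :
    ValidCoarsening E (P \ {π} ∪ {A, π \ A}) := by
  have hdisj : ({A, π \ A} : Set (Set V)).PairwiseDisjoint id :=
    Set.pairwise_pair_of_symm.2 fun _ => Set.disjoint_sdiff_right
  have hempty : ∅ ∉ ({A, π \ A} : Set (Set V)) := by
    rintro (h | h)
    · exact hA.ne_empty h.symm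
    · exact (Set.nonempty_of_ssubset hAπ).ne_empty h.symm
  have hunion : ⋃₀ {A, π \ A} = π := by
    rw [Set.sUnion_pair, Set.union_sdiff_cancel hAπ.subset]
  exact hP.sdiff_singleton_union hπ hdisj hempty hunion (quotAcyclic_pair hE)

end QuotientGraph

theorem split_at_source_validCoarsening_general
    {V ι : Type*} [Nontrivial ι] (E : V → V → Prop) (P Pstar : Set (Set V))
    (hP : ValidCoarsening E P) (hPstar : Setoid.IsPartition Pstar)
    (π : Set V) (hπ : π ∈ P) (ρ : ι → Set V)
    (hρ : ∀ j, ρ j ∈ Pstar) (hρinj : Function.Injective ρ) (hunion : π = ⋃ j, ρ j)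
    (i : ι) (hsource : ∀ j ≠ i, ∀ v ∈ ρ j, ∀ w ∈ ρ i, ¬ E v w) :
    ValidCoarsening E (P \ {π} ∪ {ρ i, π \ ρ i}) := by
  have hnonempty (j : ι) : (ρ j).Nonempty := Setoid.nonempty_of_mem_partition hPstar (hρ j)
  have hsub (j : ι) : ρ j ⊆ π := hunion ▸ Set.subset_iUnion ρ j
  have hssub : ρ i ⊂ π := by
    obtain ⟨j, hj⟩ := exists_ne i
    obtain ⟨x, hx⟩ := hnonempty j
    have hdisj : Disjoint (ρ j) (ρ i) := hPstar.pairwiseDisjoint (hρ j) (hρ i) (hρinj.ne hj)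
    exact (Set.ssubset_iff_of_subset (hsub i)).2 ⟨x, hsub j hx, hdisj.notMem_of_mem_left hx⟩
  refine hP.split hπ (hnonempty i) hssub ?_
  rintro v ⟨hvπ, hvi⟩
  obtain ⟨j, hvj⟩ := Set.mem_iUnion.1 (hunion ▸ hvπ)
  exact hsource j (fun hji => hvi (hji ▸ hvj)) v hvj

/-- let `Π` and `Π*` be valid coarsening partitions of a finite DAG with
`Π*` refining `Π`, and let `π ∈ Π` be the union of parts `ρ 0, …, ρ (m-1)` of `Π*`
(with `m ≥ 2`), where `ρ 0` is a source of the induced quotient subgraph on these parts.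
Then the partition obtained from `Π` by splitting `π` into `ρ 0` and `π \ ρ 0` is
again a valid coarsening partition. -/
theorem split_at_source_validCoarsening
    {V : Type*} [Fintype V] (E : V → V → Prop)
    (hacyc : ∀ v, ¬ Relation.TransGen E v v)
    (P Pstar : Set (Set V))
    (hP : ValidCoarsening E P) (hPstar : ValidCoarsening E Pstar)
    (href : Refines Pstar P)
    (π : Set V) (hπ : π ∈ P)
    (m : ℕ) (hm : 2 ≤ m) (ρ : Fin m → Set V)
    (hρ : ∀ j, ρ j ∈ Pstar) (hρinj : Function.Injective ρ)
    (hunion : π = ⋃ j, ρ j)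
    (hsource : ∀ j : Fin m, (j : ℕ) ≠ 0 → ∀ v ∈ ρ j, ∀ w ∈ ρ ⟨0, by omega⟩, ¬ E v w) :
    ValidCoarsening E ((P \ {π}) ∪ {ρ ⟨0, by omega⟩, π \ ρ ⟨0, by omega⟩}) := by
  have : Nontrivial (Fin m) := Fin.nontrivial_iff_two_le.2 hm
  exact split_at_source_validCoarsening_general E P Pstar hP hPstar.1 π hπ ρ hρ hρinj hunion _
    fun j hj => hsource j (Fin.val_ne_of_ne hj)
end

section
/- Let G = (V,E) be a finite DAG and let Π* be any valid coarsening partition of G with k parts. Then there exists a chain of partitions Π_0, Π_1, …, Π_{k-1} such that Π_0 = {V} is the one-part partition, Π_{k-1} = Π*, each Π_{t+1} is obtained from Π_t by splitting exactly one part into two nonempty parts, each Π_t is a valid coarsening partition of G, and each Π_t is refined by Π* (every part of Π_t is a union of parts of Π*). -/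
/-- `Q` is obtained from `P` by splitting exactly one part into two nonempty parts. -/
def SplitsInto {V : Type*} (P Q : Set (Set V)) : Prop :=
  ∃ π ∈ P, ∃ a b : Set V, a.Nonempty ∧ b.Nonempty ∧ Disjoint a b ∧ a ∪ b = π ∧
    Q = (P \ {π}) ∪ {a, b}

/-!
The parts of `Π*` can be numbered `0, …, k - 1` along a topological order of the quotient graph;
this labels the vertices monotonically along edges. Truncating the labels at `t` keeps them
monotone, and the fibers of any monotone labelling form a valid coarsening. Truncation at `0`
merges everything, truncation at `k - 1` merges nothing, and passing from `t` to `t + 1` only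
detaches the part numbered `t` from the parts with larger numbers.
-/

open Set

section Labelling

variable {V ι : Type*} {E : V → V → Prop}

theorem refines_classes_of_le {r s : Setoid V} (h : r ≤ s) : Refines r.classes s.classes := by
  rintro _ ⟨v, rfl⟩
  exact ⟨_, s.mem_classes v, fun _ hw => h hw⟩

theorem classes_ker_const [Nonempty V] (a : ι) :
    (Setoid.ker fun _ : V => a).classes = {univ} := by
  ext s
  simp [Setoid.classes, Setoid.ker_def]

section Monotone

variable [PartialOrder ι] {f : V → ι} {π ρ : Set V}

theorem lt_of_quotRel_classes_ker (hf : ∀ v w, E v w → f v ≤ f w)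
    (h : QuotRel E (Setoid.ker f).classes π ρ) : ∀ v ∈ π, ∀ w ∈ ρ, f v < f w := by
  obtain ⟨hπ, hρ, hne, x, hx, y, hy, hxy⟩ := h
  intro v hv w hw
  have hvx : f v = f x := (Setoid.rel_iff_exists_classes _).2 ⟨π, hπ, hv, hx⟩
  have hyw : f y = f w := (Setoid.rel_iff_exists_classes _).2 ⟨ρ, hρ, hy, hw⟩
  have hvw : f v ≠ f w := fun h => by
    obtain ⟨σ, hσ, hvσ, hwσ⟩ := (Setoid.rel_iff_exists_classes (Setoid.ker f)).1 h
    exact hne ((Setoid.eq_of_mem_classes hπ hv hσ hvσ).trans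
      (Setoid.eq_of_mem_classes hσ hwσ hρ hw))
  exact lt_of_le_of_ne (hvx.trans_le ((hf x y hxy).trans_eq hyw)) hvw

theorem lt_of_transGen_quotRel_classes_ker (hf : ∀ v w, E v w → f v ≤ f w)
    (h : Relation.TransGen (QuotRel E (Setoid.ker f).classes) π ρ) :
    ∀ v ∈ π, ∀ w ∈ ρ, f v < f w := by
  induction h with
  | single h => exact lt_of_quotRel_classes_ker hf h
  | tail _ h ih =>
    obtain ⟨x, hx, -⟩ := h.2.2.2
    exact fun v hv w hw => (ih v hv x hx).trans (lt_of_quotRel_classes_ker hf h x hx w hw)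

theorem validCoarsening_classes_ker (hf : ∀ v w, E v w → f v ≤ f w) :
    ValidCoarsening E (Setoid.ker f).classes := by
  refine ⟨Setoid.isPartition_classes _, fun π hcycle => ?_⟩
  obtain ⟨_, ⟨-, -, -, v, hv, -⟩, -⟩ := Relation.TransGen.head'_iff.1 hcycle
  exact (lt_of_transGen_quotRel_classes_ker hf hcycle v hv v hv).false

end Monotone

section Truncation

variable [LinearOrder ι] {c : V → ι} {t u : ι}

theorem classes_ker_min (ht : ∃ v, t ≤ c v) :
    (Setoid.ker fun v => min (c v) t).classes =
      insert (c ⁻¹' Ici t) ((fun a => c ⁻¹' {a}) '' (range c ∩ Iio t)) := by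
  have fiber_of_le (v : V) (hv : t ≤ c v) : {w | min (c w) t = min (c v) t} = c ⁻¹' Ici t := by
    ext w
    simp [hv]
  have fiber_of_lt (v : V) (hv : c v < t) : {w | min (c w) t = min (c v) t} = c ⁻¹' {c v} := by
    ext w
    simp only [mem_ofPred_eq, mem_preimage, mem_singleton_iff]
    grind
  ext s
  constructor
  · rintro ⟨v, rfl⟩
    rcases le_or_gt t (c v) with hv | hv
    · exact Or.inl (fiber_of_le v hv)
    · exact Or.inr ⟨c v, ⟨mem_range_self v, hv⟩, (fiber_of_lt v hv).symm⟩
  · rintro (rfl | ⟨_, ⟨⟨v, rfl⟩, hv⟩, rfl⟩)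
    · obtain ⟨v, hv⟩ := ht
      exact ⟨v, (fiber_of_le v hv).symm⟩
    · exact ⟨v, (fiber_of_lt v hv).symm⟩

theorem splitsInto_classes_ker_min (htu : t ⋖ u) (ht : t ∈ range c) (hu : ∃ v, u ≤ c v) :
    SplitsInto (Setoid.ker fun v => min (c v) t).classes
      (Setoid.ker fun v => min (c v) u).classes := by
  obtain ⟨x, hx⟩ := ht
  have hIci : insert t (Ici u) = Ici t := by rw [← htu.Ioi_eq, Ioi_insert]
  have hnew : c ⁻¹' Ici t ∉ (fun a => c ⁻¹' {a}) '' (range c ∩ Iio t) := by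
    rintro ⟨a, ⟨-, hat⟩, ha⟩
    have hxa : x ∈ c ⁻¹' {a} := ha.ge hx.ge
    exact hat.ne (hxa.symm.trans hx)
  rw [classes_ker_min ⟨x, hx.ge⟩, classes_ker_min hu]
  refine ⟨c ⁻¹' Ici t, mem_insert _ _, c ⁻¹' {t}, c ⁻¹' Ici u, ⟨x, hx⟩, hu, ?_, ?_, ?_⟩
  · exact Disjoint.preimage c (disjoint_singleton_left.2 htu.lt.not_ge)
  · rw [← preimage_union, singleton_union, hIci]
  · rw [insert_sdiff_self_of_notMem hnew, htu.Iio_eq, ← Iio_insert,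
      inter_insert_of_mem (mem_range.2 ⟨x, hx⟩), image_insert_eq, union_insert, union_singleton,
      insert_comm]

end Truncation

end Labelling

theorem exists_topological_numbering {α : Type*} [Finite α] {r : α → α → Prop}
    (hr : ∀ a, ¬ Relation.TransGen r a a) :
    ∃ g : α ≃ Fin (Nat.card α), ∀ a b, r a b → g a < g b := by
  have : IsStrictOrder α (Relation.TransGen r) := { irrefl := hr }
  let _ : PartialOrder α := partialOrderOfSO (Relation.TransGen r)
  let _ : Fintype (LinearExtension α) := Fintype.ofFinite α
  let g := (Fintype.orderIsoFinOfCardEq (LinearExtension α) Nat.card_eq_fintype_card.symm).symm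
  refine ⟨g.toEquiv, fun a b hab => ?_⟩
  have hlt : a < b := Relation.TransGen.single hab
  exact (g.monotone (toLinearExtension.monotone hlt.le)).lt_of_ne (g.injective.ne hlt.ne)

theorem ValidCoarsening.exists_monotone_labelling {V : Type*} {E : V → V → Prop}
    {P : Set (Set V)} (hP : ValidCoarsening E P) (hfin : P.Finite) :
    ∃ c : V → ℕ, range c = Iio P.ncard ∧ (∀ v w, E v w → c v ≤ c w) ∧
      (Setoid.ker c).classes = P := by
  obtain ⟨r, rfl⟩ : ∃ r : Setoid V, r.classes = P := ⟨_, Setoid.classes_mkClasses P hP.1⟩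
  have : Finite r.classes := hfin
  obtain ⟨g, hg⟩ := exists_topological_numbering
    (r := fun a b : r.classes => QuotRel E r.classes a b)
    fun a h => hP.2 a (h.lift Subtype.val fun _ _ => id)
  let e : Quotient r ≃ Fin r.classes.ncard := r.quotientEquivClasses.trans g
  refine ⟨fun v => e ⟦v⟧, ?_, fun v w hvw => ?_, ?_⟩
  · change range (Fin.val ∘ e ∘ Quotient.mk r) = _
    rw [(e.surjective.comp Quotient.mk_surjective).range_comp, Fin.range_val]
  · by_cases heq : r.quotientEquivClasses ⟦v⟧ = r.quotientEquivClasses ⟦w⟧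
    · exact (congrArg (fun a => (g a : ℕ)) heq).le
    · refine (hg _ _ ⟨Subtype.prop _, Subtype.prop _, Subtype.coe_ne_coe.2 heq, ?_⟩).le
      simp only [Setoid.quotientEquivClasses_mk_eq]
      exact ⟨v, r.refl v, w, r.refl w, hvw⟩
  · congr 1
    ext v w
    exact (Fin.val_injective.comp e.injective).eq_iff.trans Quotient.eq

theorem chain_of_splits_to_valid_coarsening_general {V : Type*} [Nonempty V] (E : V → V → Prop)
    (Pstar : Set (Set V)) (hfin : Pstar.Finite) (hPstar : ValidCoarsening E Pstar)
    (k : ℕ) (hk : Pstar.ncard = k) :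
    ∃ P : ℕ → Set (Set V),
      P 0 = {Set.univ} ∧
      P (k - 1) = Pstar ∧
      (∀ t < k - 1, SplitsInto (P t) (P (t + 1))) ∧
      (∀ t ≤ k - 1, ValidCoarsening E (P t)) ∧
      (∀ t ≤ k - 1, Refines Pstar (P t)) := by
  obtain ⟨c, hrange, hmono, rfl⟩ := hPstar.exists_monotone_labelling hfin
  rw [hk] at hrange
  have hmem {t : ℕ} (ht : t < k) : t ∈ range c := hrange ▸ ht
  have hle (v : V) : c v ≤ k - 1 := Nat.le_sub_one_of_lt (hrange ▸ mem_range_self v : c v ∈ Iio k)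
  refine ⟨fun t => (Setoid.ker fun v => min (c v) t).classes, ?_, ?_, fun t ht => ?_,
    fun t _ => ?_, fun t _ => ?_⟩
  · simpa only [Nat.min_zero] using classes_ker_const 0
  · simp only [hle, min_eq_left]
  · obtain ⟨y, hy⟩ := hmem (t := t + 1) (by lia)
    exact splitsInto_classes_ker_min (Order.covBy_add_one t) (hmem (by lia)) ⟨y, hy.ge⟩
  · exact validCoarsening_classes_ker fun v w hvw => min_le_min_right t (hmono v w hvw)
  · exact refines_classes_of_le fun v w (h : c v = c w) => congrArg (min · t) h

/-- for any valid coarsening partition `Π*` of a finite DAG with `k` parts,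
there is a chain `Π_0 = {V}, Π_1, …, Π_{k-1} = Π*` in which each `Π_{t+1}` is obtained
from `Π_t` by splitting one part in two, each `Π_t` is a valid coarsening partition,
and each `Π_t` is refined by `Π*`. -/
theorem chain_of_splits_to_valid_coarsening
    {V : Type*} [Fintype V] [Nonempty V] (E : V → V → Prop)
    (hacyc : ∀ v, ¬ Relation.TransGen E v v)
    (Pstar : Set (Set V)) (hPstar : ValidCoarsening E Pstar)
    (k : ℕ) (hk : Pstar.ncard = k) :
    ∃ P : ℕ → Set (Set V),
      P 0 = {Set.univ} ∧
      P (k - 1) = Pstar ∧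
      (∀ t < k - 1, SplitsInto (P t) (P (t + 1))) ∧
      (∀ t ≤ k - 1, ValidCoarsening E (P t)) ∧
      (∀ t ≤ k - 1, Refines Pstar (P t)) := by
  exact chain_of_splits_to_valid_coarsening_general E Pstar (Set.toFinite Pstar) hPstar k hk
end
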